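/- A function u : X → [-∞, ∞) is S-subharmonic on X if and only if there exists a sequence (u_j) of functions in S that decreases pointwise to u on X. -/

import Mathlib

/-!
A decreasing limit `u` of functions in `S` is upper semicontinuous, and passing to the limit in
`u z ≤ u_j z ≤ ∫ u_j dμ` (monotone convergence for the positive and negative parts) gives the mean
value inequality.

The converse rests on Edwards' duality theorem (`exists_isJensenMeasure_integral_le`): if no `v ∈ S`
satisfies both `v < φ` and `v z > c`, then some Jensen measure `μ` at `z` has `∫ φ dμ ≤ c`. It
follows from Hahn-Banach separation and the Riesz representation theorem. Applied with `c = u z`, it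
contradicts `u z ≤ ∫ u dμ < ∫ φ dμ` for `S`-subharmonic `u < φ`; so at each point some `v ∈ S` with
`v < φ` exceeds `u`, hence also nearby by semicontinuity. A maximum over a finite subcover gives
`v ∈ S` with `u < v < φ` everywhere (`exists_mem_between`). Finally, `u` is the pointwise infimum of
a sequence `φ_j` dense among the continuous functions strictly above `u`, and inserting `u_{j+1} ∈ S`
strictly between `u` and `min u_j φ_{j+1}` produces the decreasing sequence.
-/

open MeasureTheory Topology Filter
open scoped ENNReal

/-- The nonnegative part of an extended real number, as an element of `ℝ≥0∞`. -/
noncomputable def erealToENNReal (a : EReal) : ℝ≥0∞ :=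
  if a = ⊤ then ⊤ else ENNReal.ofReal a.toReal

/-- The (upper) integral of a function with values in `[-∞, ∞]`, defined as the
difference of the lower integrals of its positive and negative parts. -/
noncomputable def erealIntegral {α : Type*} [MeasurableSpace α]
    (μ : Measure α) (u : α → EReal) : EReal :=
  ((∫⁻ x, erealToENNReal (u x) ∂μ : ℝ≥0∞) : EReal) -
    ((∫⁻ x, erealToENNReal (-(u x)) ∂μ : ℝ≥0∞) : EReal)

/-- `μ` is a Jensen measure with barycenter `z` with respect to the family `S` of
(continuous real-valued) functions: a Borel probability measure such that
`u z ≤ ∫ u dμ` for every `u ∈ S`. -/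
def IsJensenMeasure {α : Type*} [MeasurableSpace α]
    (S : Set (α → ℝ)) (z : α) (μ : Measure α) : Prop :=
  IsProbabilityMeasure μ ∧ ∀ u ∈ S, u z ≤ ∫ x, u x ∂μ

/-- A function `u : α → [-∞, ∞)` is `S`-subharmonic if it is upper semicontinuous
and satisfies `u z ≤ ∫ u dμ` for every `z` and every Jensen measure `μ` with
barycenter `z` w.r.t. `S`. -/
def IsSSubharmonic {α : Type*} [TopologicalSpace α] [MeasurableSpace α]
    (S : Set (α → ℝ)) (u : α → EReal) : Prop :=
  UpperSemicontinuous u ∧ (∀ x, u x ≠ ⊤) ∧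
    ∀ z : α, ∀ μ : Measure α, IsJensenMeasure S z μ → u z ≤ erealIntegral μ u

/-! ### The extended-real integral -/

theorem erealToENNReal_eq (a : EReal) : erealToENNReal a = a.toENNReal := rfl

/-- On real-valued integrable functions the extended integral is the Bochner integral. -/
theorem erealIntegral_coe {α : Type*} [MeasurableSpace α] {μ : Measure α} {f : α → ℝ}
    (hf : Integrable f μ) :
    erealIntegral μ (fun x => (f x : EReal)) = ((∫ x, f x ∂μ : ℝ) : EReal) := by
  have h1 : ∫⁻ x, ENNReal.ofReal (f x) ∂μ ≠ ⊤ := hf.lintegral_lt_top.ne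
  have h2 : ∫⁻ x, ENNReal.ofReal (-f x) ∂μ ≠ ⊤ := hf.neg.lintegral_lt_top.ne
  have e : ∀ x, erealToENNReal (-(f x : EReal)) = ENNReal.ofReal (-f x) := fun x => by
    rw [erealToENNReal_eq, ← EReal.coe_neg, EReal.real_coe_toENNReal]
  rw [integral_eq_lintegral_pos_part_sub_lintegral_neg_part hf, erealIntegral, EReal.coe_sub]
  simp only [e, erealToENNReal_eq, EReal.real_coe_toENNReal]
  rw [EReal.coe_ennreal_toReal h1, EReal.coe_ennreal_toReal h2]

/-- If `u < φ` everywhere and `φ` is integrable, then a real lower bound for `∫ u` is strictly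
below `∫ φ`. -/
theorem lt_integral_of_le_erealIntegral {α : Type*} [MeasurableSpace α] {μ : Measure α}
    [IsProbabilityMeasure μ] {u : α → EReal} (hu : Measurable u) {φ : α → ℝ}
    (hφ : Integrable φ μ) (huφ : ∀ x, u x < (φ x : EReal)) {c : ℝ}
    (hc : (c : EReal) ≤ erealIntegral μ u) : c < ∫ x, φ x ∂μ := by
  have hP : ∫⁻ x, erealToENNReal (u x) ∂μ ≠ ⊤ := by
    refine ((lintegral_mono fun x => ?_).trans_lt hφ.lintegral_lt_top).ne
    exact (EReal.toENNReal_le_toENNReal (huφ x).le).trans_eq (EReal.real_coe_toENNReal _)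
  have hN : ∫⁻ x, erealToENNReal (-u x) ∂μ ≠ ⊤ := by
    intro h
    rw [erealIntegral, h] at hc
    simp at hc
  have hmN : Measurable fun x => erealToENNReal (-u x) := by
    simp only [erealToENNReal_eq]
    exact hu.neg.ereal_toENNReal
  have hbot : ∀ᵐ x ∂μ, u x ≠ ⊥ := by
    filter_upwards [ae_lt_top hmN hN] with x hx h
    rw [h] at hx
    simp [erealToENNReal_eq] at hx
  have hae : ∀ᵐ x ∂μ, u x = ((u x).toReal : EReal) := by
    filter_upwards [hbot] with x hx
    exact (EReal.coe_toReal (huφ x).ne_top hx).symm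
  have hint : Integrable (fun x => (u x).toReal) μ := by
    refine ⟨hu.ereal_toReal.aestronglyMeasurable, ?_⟩
    refine lt_of_le_of_lt (b := ∫⁻ x, (erealToENNReal (u x) + erealToENNReal (-u x)) ∂μ) ?_ ?_
    · refine lintegral_mono_ae ?_
      filter_upwards [hae] with x hx
      generalize (u x).toReal = r at hx
      rw [hx, erealToENNReal_eq, erealToENNReal_eq, ← EReal.coe_neg, EReal.real_coe_toENNReal,
        EReal.real_coe_toENNReal, Real.enorm_eq_ofReal_abs]
      rcases le_total 0 r with h | h
      · rw [abs_of_nonneg h]; exact le_self_add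
      · rw [abs_of_nonpos h]; exact le_add_self
    · rw [lintegral_add_right _ hmN]
      exact ENNReal.add_lt_top.2 ⟨hP.lt_top, hN.lt_top⟩
  have heq : erealIntegral μ u = ((∫ x, (u x).toReal ∂μ : ℝ) : EReal) := by
    rw [← erealIntegral_coe hint, erealIntegral, erealIntegral]
    congr 1
    · congr 1
      refine lintegral_congr_ae ?_
      filter_upwards [hae] with x hx
      rw [← hx]
    · congr 1
      refine lintegral_congr_ae ?_
      filter_upwards [hae] with x hx
      rw [← hx]
  rw [heq, EReal.coe_le_coe_iff] at hc
  refine hc.trans_lt ?_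
  have hlt : ∀ᵐ x ∂μ, 0 < φ x - (u x).toReal := by
    filter_upwards [hae] with x hx
    have := huφ x
    rw [hx, EReal.coe_lt_coe_iff] at this
    linarith
  have hpos : 0 < ∫ x, (φ x - (u x).toReal) ∂μ := by
    rw [integral_pos_iff_support_of_nonneg_ae (hlt.mono fun x hx => hx.le) (hφ.sub hint)]
    have : (Function.support fun x => φ x - (u x).toReal) =ᵐ[μ] Set.univ := by
      filter_upwards [hlt] with x hx
      exact propext ⟨fun _ => trivial, fun _ => hx.ne'⟩
    rw [measure_congr this]
    simp
  rw [integral_sub hφ hint] at hpos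
  linarith

/-- The extended integral is continuous along decreasing sequences of measurable
integrable functions: apply the two monotone convergence theorems to the positive and negative
parts; the limit of the positive parts is finite, so no `∞ - ∞` occurs. -/
theorem tendsto_erealIntegral {α : Type*} [MeasurableSpace α] {μ : Measure α}
    {u : α → EReal} {f : ℕ → α → ℝ} (hm : ∀ j, Measurable (f j))
    (hf : ∀ j, Integrable (f j) μ) (hanti : ∀ x, Antitone fun j => f j x)
    (hlim : ∀ x, Tendsto (fun j => (f j x : EReal)) atTop (𝓝 (u x))) :
    Tendsto (fun j => ((∫ x, f j x ∂μ : ℝ) : EReal)) atTop (𝓝 (erealIntegral μ u)) := by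
  have hcont : Continuous EReal.toENNReal := by fun_prop
  have hle : ∀ x j, u x ≤ f j x := fun x j =>
    Antitone.le_of_tendsto (fun a b hab => EReal.coe_le_coe_iff.2 (hanti x hab)) (hlim x) j
  have hP0 : ∫⁻ x, erealToENNReal (f 0 x : EReal) ∂μ ≠ ⊤ := (hf 0).lintegral_lt_top.ne
  have hP : Tendsto (fun j => ∫⁻ x, erealToENNReal (f j x : EReal) ∂μ) atTop
      (𝓝 (∫⁻ x, erealToENNReal (u x) ∂μ)) := by
    refine lintegral_tendsto_of_tendsto_of_antitone
      (fun j => (hm j).coe_real_ereal.ereal_toENNReal.aemeasurable)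
      (ae_of_all _ fun x a b hab => EReal.toENNReal_le_toENNReal
        (EReal.coe_le_coe_iff.2 (hanti x hab))) hP0
      (ae_of_all _ fun x => (hcont.tendsto _).comp (hlim x))
  have hN : Tendsto (fun j => ∫⁻ x, erealToENNReal (-(f j x : EReal)) ∂μ) atTop
      (𝓝 (∫⁻ x, erealToENNReal (-u x) ∂μ)) := by
    refine lintegral_tendsto_of_tendsto_of_monotone
      (fun j => (hm j).coe_real_ereal.neg.ereal_toENNReal.aemeasurable)
      (ae_of_all _ fun x a b hab => EReal.toENNReal_le_toENNReal
        (EReal.neg_le_neg_iff.2 (EReal.coe_le_coe_iff.2 (hanti x hab))))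
      (ae_of_all _ fun x => (hcont.tendsto _).comp ((continuous_neg.tendsto _).comp (hlim x)))
  have hPu : ∫⁻ x, erealToENNReal (u x) ∂μ ≠ ⊤ :=
    ((lintegral_mono fun x => EReal.toENNReal_le_toENNReal (hle x 0)).trans_lt hP0.lt_top).ne
  simp_rw [← erealIntegral_coe (hf _)]
  simp only [erealIntegral, sub_eq_add_neg]
  have hc := EReal.continuousAt_add (p := ((∫⁻ x, erealToENNReal (u x) ∂μ : ℝ≥0∞),
    -((∫⁻ x, erealToENNReal (-u x) ∂μ : ℝ≥0∞) : EReal))) (Or.inl (by simpa using hPu))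
    (Or.inl (by simp))
  exact hc.tendsto.comp (((continuous_coe_ennreal_ereal.tendsto _).comp hP).prodMk_nhds
    ((continuous_neg.tendsto _).comp ((continuous_coe_ennreal_ereal.tendsto _).comp hN)))

/-! ### Edwards' duality -/

/-- The Riesz representation theorem on a compact space, for a normalized positive functional on
all continuous functions. -/
theorem exists_probability_of_positive {α : Type*} [TopologicalSpace α] [CompactSpace α]
    [T2Space α] [MeasurableSpace α] [BorelSpace α] (L : C(α, ℝ) →ₗ[ℝ] ℝ)
    (hpos : ∀ g, 0 ≤ g → 0 ≤ L g) (hone : L 1 = 1) :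
    ∃ μ : Measure α, IsProbabilityMeasure μ ∧ ∀ g : C(α, ℝ), ∫ x, g x ∂μ = L g := by
  let Λ₀ : CompactlySupportedContinuousMap α ℝ →ₗ[ℝ] ℝ :=
    { toFun := fun f => L f.toContinuousMap
      map_add' := fun f g => by rw [← map_add]; rfl
      map_smul' := fun t f => by rw [RingHom.id_apply, ← map_smul]; rfl }
  let Λ := PositiveLinearMap.mk₀ Λ₀ (fun f hf => hpos _ hf)
  have key : ∀ g : C(α, ℝ), ∫ x, g x ∂(RealRMK.rieszMeasure Λ) = L g := fun g =>
    RealRMK.integral_rieszMeasure Λ (CompactlySupportedContinuousMap.continuousMapEquiv g)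
  refine ⟨RealRMK.rieszMeasure Λ, ?_, key⟩
  have h1 := key 1
  rw [hone] at h1
  simp only [ContinuousMap.one_apply, integral_const, smul_eq_mul, mul_one] at h1
  refine ⟨?_⟩
  rw [← ENNReal.toReal_eq_one_iff]
  exact h1

/-- Edwards' duality: if no element of the cone `S` lies below `φ` and exceeds `c` at `z`, then
Hahn-Banach separation of `φ` from the convex open set of continuous functions that do lie
above such an element produces a Jensen measure `μ` at `z` with `∫ φ dμ ≤ c`. -/
theorem exists_isJensenMeasure_integral_le {α : Type*} [TopologicalSpace α] [CompactSpace α]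
    [T2Space α] [MeasurableSpace α] [BorelSpace α] (S : Set (α → ℝ))
    (hS : ∀ f ∈ S, Continuous f) (hconst : ∀ c : ℝ, (fun _ => c) ∈ S)
    (hadd : ∀ u ∈ S, ∀ v ∈ S, u + v ∈ S)
    (hsmul : ∀ u ∈ S, ∀ t : ℝ, 0 ≤ t → t • u ∈ S) (z : α) (φ : C(α, ℝ)) (c : ℝ)
    (h : ¬ ∃ v ∈ S, c < v z ∧ ∀ x, v x < φ x) :
    ∃ μ : Measure α, IsJensenMeasure S z μ ∧ ∫ x, φ x ∂μ ≤ c := by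
  let A : Set C(α, ℝ) := {g | ∃ v ∈ S, c < v z ∧ ∀ x, v x < g x}
  have hconv : Convex ℝ A := by
    rintro g ⟨v, hv, hvz, hvg⟩ g' ⟨v', hv', hvz', hvg'⟩ a b ha hb hab
    refine ⟨a • v + b • v', hadd _ (hsmul _ hv _ ha) _ (hsmul _ hv' _ hb), ?_, fun x => ?_⟩
    · have := convex_Ioi c hvz hvz' ha hb hab
      simpa using this
    · have := convex_Ioi (0 : ℝ) (sub_pos.2 (hvg x)) (sub_pos.2 (hvg' x)) ha hb hab
      simp only [smul_eq_mul, Set.mem_Ioi] at this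
      simp only [Pi.add_apply, Pi.smul_apply, smul_eq_mul, ContinuousMap.add_apply,
        ContinuousMap.smul_apply]
      linarith
  have hopen : IsOpen A := by
    have : A = ⋃ v : {v // v ∈ S ∧ c < v z}, {g : C(α, ℝ) | ∀ x, v.1 x < g x} := by
      ext g
      simp [A, and_assoc]
    rw [this]
    refine isOpen_iUnion fun ⟨v, hv, _⟩ => ?_
    have h1 : IsOpen {g : C(α, ℝ) | Set.MapsTo g Set.univ (Set.Ioi (0 : ℝ))} :=
      ContinuousMap.isOpen_setOfPred_mapsTo isCompact_univ isOpen_Ioi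
    have h2 := h1.preimage
      (continuous_id.sub continuous_const : Continuous fun g : C(α, ℝ) => g - ⟨v, hS v hv⟩)
    convert h2 using 1
    ext g
    simp [Set.MapsTo]
  obtain ⟨F, hF⟩ := geometric_hahn_banach_open_point hconv hopen (show φ ∉ A from h)
  -- A slope `a` whose ray `t ↦ t * a + b`, `t ≥ 0`, is bounded above is nonpositive.
  have hray : ∀ a b d : ℝ, (∀ t : ℝ, 0 ≤ t → t * a + b < d) → a ≤ 0 := by
    intro a b d hab
    by_contra! ha
    have h0 := hab 0 le_rfl
    have := hab ((d - b) / a) (div_nonneg (by linarith) ha.le)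
    rw [div_mul_cancel₀ _ ha.ne'] at this
    linarith
  -- Continuous majorants of elements of `S` vanishing at `z`, shifted by more than `c`, lie in `A`.
  have hA1 : ∀ ε : ℝ, 0 < ε → ∀ v ∈ S, v z = 0 → ∀ g : C(α, ℝ), (∀ x, v x ≤ g x) →
      F g + (c + 2 * ε) * F 1 < F φ := by
    intro ε hε v hv hvz g hg
    have := hF (g + (c + 2 * ε) • 1) ⟨v + fun _ => c + ε, hadd _ hv _ (hconst _), by
      simp [hvz, hε], fun x => by
        have := hg x
        simp only [Pi.add_apply, ContinuousMap.add_apply, ContinuousMap.smul_apply,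
          ContinuousMap.one_apply, smul_eq_mul, mul_one]
        linarith⟩
    simpa using this
  have hneg : ∀ g : C(α, ℝ), 0 ≤ g → F g ≤ 0 := by
    intro g hg
    refine hray _ ((c + 2 * 1) * F 1) (F φ) fun t ht => ?_
    have := hA1 1 one_pos (fun _ => 0) (hconst 0) rfl (t • g) fun x => by
      simpa using mul_nonneg ht (hg x)
    simpa using this
  have hSneg : ∀ v : C(α, ℝ), ⇑v ∈ S → F v ≤ v z * F 1 := by
    intro v hv
    rw [← sub_nonpos]
    refine hray _ ((c + 2 * 1) * F 1) (F φ) fun t ht => ?_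
    have := hA1 1 one_pos (t • (⇑v + fun _ => -v z))
      (hsmul _ (hadd _ hv _ (hconst _)) _ ht) (by simp) (t • (v - v z • 1)) fun x => by
        change t * (v x + -v z) ≤ t * (v x - v z * 1)
        rw [mul_one, sub_eq_add_neg]
    simpa using this
  have hF1 : F 1 < 0 := by
    refine lt_of_le_of_ne (hneg 1 zero_le_one) fun h1 => ?_
    have habs : ∀ g : C(α, ℝ), F g ≤ 0 := by
      intro g
      have := hneg (g + ‖g‖ • 1) fun x => by
        have := (abs_le.1 (g.norm_coe_le_norm x)).1
        change 0 ≤ g x + ‖g‖ * 1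
        linarith
      simpa [h1] using this
    have := hA1 1 one_pos (fun _ => 0) (hconst 0) rfl 0 fun x => le_rfl
    have h2 := habs φ
    simp [h1] at this
    linarith
  obtain ⟨μ, hμ, hint⟩ := exists_probability_of_positive ((F 1)⁻¹ • (F : C(α, ℝ) →ₗ[ℝ] ℝ))
    (fun g hg => by
      simpa using mul_nonneg_of_nonpos_of_nonpos (inv_nonpos.2 hF1.le) (hneg g hg))
    (by simp [hF1.ne])
  refine ⟨μ, ⟨hμ, fun v hv => ?_⟩, ?_⟩
  · have h1 := hint ⟨v, hS v hv⟩
    have h2 := hSneg ⟨v, hS v hv⟩ hv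
    simp only [ContinuousMap.coe_mk] at h1 h2
    rw [h1]
    simp only [LinearMap.smul_apply, smul_eq_mul, ContinuousLinearMap.coe_coe]
    rw [inv_mul_eq_div, le_div_iff_of_neg hF1]
    exact h2
  · rw [hint φ]
    simp only [LinearMap.smul_apply, smul_eq_mul, ContinuousLinearMap.coe_coe]
    rw [inv_mul_eq_div]
    refine le_of_forall_pos_lt_add fun ε hε => ?_
    rw [div_lt_iff_of_neg hF1]
    have := hA1 (ε / 2) (by linarith) (fun _ => 0) (hconst 0) rfl 0 fun x => le_rfl
    rw [map_zero, zero_add] at this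
    rwa [mul_div_cancel₀ ε two_ne_zero] at this

/-! ### Insertion and approximation -/

/-- Insertion: between an `S`-subharmonic function and a strictly larger continuous function
there is an element of `S`. Pointwise this is Edwards' duality; compactness and stability under
maxima make it uniform. -/
theorem exists_mem_between {α : Type*} [TopologicalSpace α] [CompactSpace α]
    [T2Space α] [MeasurableSpace α] [BorelSpace α] (S : Set (α → ℝ))
    (hS : ∀ f ∈ S, Continuous f) (hconst : ∀ c : ℝ, (fun _ => c) ∈ S)
    (hadd : ∀ u ∈ S, ∀ v ∈ S, u + v ∈ S)
    (hsmul : ∀ u ∈ S, ∀ t : ℝ, 0 ≤ t → t • u ∈ S)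
    (hmax : ∀ u ∈ S, ∀ v ∈ S, (fun x => max (u x) (v x)) ∈ S)
    {u : α → EReal} (hu : IsSSubharmonic S u) (φ : C(α, ℝ)) (hφ : ∀ x, u x < φ x) :
    ∃ v ∈ S, ∀ x, u x < (v x : EReal) ∧ v x < φ x := by
  obtain ⟨husc, htop, hmean⟩ := hu
  -- A constant strictly below `φ`.
  have hbd : ∀ x, -‖φ‖ - 1 < φ x := fun x => by
    have := (abs_le.1 (φ.norm_coe_le_norm x)).1
    linarith
  have hpt : ∀ z, ∃ v ∈ S, u z < (v z : EReal) ∧ ∀ x, v x < φ x := by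
    intro z
    by_cases hz : u z = ⊥
    · exact ⟨fun _ => -‖φ‖ - 1, hconst _, by rw [hz]; exact EReal.bot_lt_coe _, hbd⟩
    by_contra hno
    have hc : ((u z).toReal : EReal) = u z := EReal.coe_toReal (htop z) hz
    rw [← hc] at hno
    simp only [EReal.coe_lt_coe_iff] at hno
    obtain ⟨μ, hμ, hle⟩ := exists_isJensenMeasure_integral_le S hS hconst hadd hsmul z φ _ hno
    have := hμ.1
    have hlt := lt_integral_of_le_erealIntegral husc.measurable
      (φ.continuous.integrable_of_hasCompactSupport (HasCompactSupport.of_compactSpace _)) hφ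
      (hc.trans_le (hmean z μ hμ))
    linarith
  choose w hwS hwz hwφ using hpt
  have hnhds : ∀ z, {x | u x < (w z x : EReal)} ∈ 𝓝 z := by
    intro z
    obtain ⟨r, hr1, hr2⟩ := EReal.lt_iff_exists_real_btwn.1 (hwz z)
    filter_upwards [husc z _ hr1, (hS _ (hwS z)).continuousAt.eventually
      (lt_mem_nhds (EReal.coe_lt_coe_iff.1 hr2))] with x h1 h2
    exact h1.trans (EReal.coe_lt_coe_iff.2 h2)
  obtain ⟨t, ht⟩ := CompactSpace.elim_nhds_subcover _ hnhds
  have hfin : ∀ t : Finset α, ∃ v ∈ S, (∀ x, v x < φ x) ∧ ∀ z ∈ t, ∀ x, w z x ≤ v x := by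
    intro t
    classical
    induction t using Finset.induction_on with
    | empty => exact ⟨fun _ => -‖φ‖ - 1, hconst _, hbd, by simp⟩
    | insert a s _ ih =>
      obtain ⟨v, hv, hvφ, hvs⟩ := ih
      refine ⟨_, hmax _ (hwS a) _ hv, fun x => max_lt (hwφ a x) (hvφ x), fun z hz x => ?_⟩
      rcases Finset.mem_insert.1 hz with rfl | hz
      · exact le_max_left _ _
      · exact (hvs z hz x).trans (le_max_right _ _)
  obtain ⟨v, hv, hvφ, hvt⟩ := hfin t
  refine ⟨v, hv, fun x => ⟨?_, hvφ x⟩⟩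
  have hx : x ∈ ⋃ z ∈ t, {x | u x < (w z x : EReal)} := by rw [ht]; trivial
  simp only [Set.mem_iUnion] at hx
  obtain ⟨z, hz, hx⟩ := hx
  exact lt_of_lt_of_le hx (EReal.coe_le_coe_iff.2 (hvt z hz x))

/-- An upper semicontinuous `u < ∞` on a compact Hausdorff space is the pointwise infimum of the
continuous functions strictly above it. -/
theorem exists_continuous_above {α : Type*} [TopologicalSpace α] [CompactSpace α]
    [T2Space α] {u : α → EReal} (husc : UpperSemicontinuous u) (htop : ∀ x, u x ≠ ⊤)
    (z : α) (r : ℝ) (hr : u z < r) : ∃ φ : C(α, ℝ), (∀ x, u x < φ x) ∧ φ z = r := by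
  obtain ⟨m, -, hm⟩ := (husc.upperSemicontinuousOn Set.univ).exists_isMaxOn ⟨z, Set.mem_univ z⟩
    isCompact_univ
  obtain ⟨M, hM, -⟩ := EReal.lt_iff_exists_real_btwn.1 (htop m).lt_top
  have hUM : ∀ x, u x < M := fun x => (hm (Set.mem_univ x)).trans_lt hM
  obtain ⟨f, h0, h1, h01⟩ := exists_bounded_mem_Icc_of_closed_of_le (isClosed_singleton (x := z))
    (husc.isOpen_preimage r).isClosed_compl
    (Set.disjoint_singleton_left.2 (by simpa using hr)) (le_max_left r M)
  refine ⟨f.toContinuousMap, fun x => ?_, h0 rfl⟩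
  by_cases hx : u x < r
  · exact hx.trans_le (EReal.coe_le_coe_iff.2 (h01 x).1)
  · have : f x = max r M := h1 (by simpa using hx)
    change u x < ((f x : ℝ) : EReal)
    rw [this]
    exact (hUM x).trans_le (EReal.coe_le_coe_iff.2 (le_max_right _ _))

/-- The sequence is built by inserting `u_{j+1} ∈ S` strictly between `u` and the minimum of `u_j`
and the next member of a sequence dense among the continuous functions above `u`; metrizability
is used for the separability of `C(α, ℝ)`. -/
theorem exists_decreasing_approx {α : Type*} [TopologicalSpace α] [CompactSpace α]
    [TopologicalSpace.MetrizableSpace α] [MeasurableSpace α] [BorelSpace α] (S : Set (α → ℝ))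
    (hS : ∀ f ∈ S, Continuous f) (hconst : ∀ c : ℝ, (fun _ => c) ∈ S)
    (hadd : ∀ u ∈ S, ∀ v ∈ S, u + v ∈ S)
    (hsmul : ∀ u ∈ S, ∀ t : ℝ, 0 ≤ t → t • u ∈ S)
    (hmax : ∀ u ∈ S, ∀ v ∈ S, (fun x => max (u x) (v x)) ∈ S)
    {u : α → EReal} (hu : IsSSubharmonic S u) :
    ∃ uj : ℕ → α → ℝ, (∀ j, uj j ∈ S) ∧ (∀ x, Antitone fun j => uj j x) ∧
      (∀ x, Tendsto (fun j => ((uj j x : ℝ) : EReal)) atTop (𝓝 (u x))) := by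
  let := TopologicalSpace.metrizableSpaceMetric α
  have husc := hu.1
  rcases isEmpty_or_nonempty α with he | ⟨⟨z₀⟩⟩
  · exact ⟨fun _ _ => 0, fun _ => hconst 0, fun x => he.elim x, fun x => he.elim x⟩
  -- A sequence dense among the continuous functions strictly above `u`.
  have : Nonempty {g : C(α, ℝ) // ∀ x, u x < g x} := by
    obtain ⟨r, hr, -⟩ := EReal.lt_iff_exists_real_btwn.1 (hu.2.1 z₀).lt_top
    obtain ⟨φ, hφ, -⟩ := exists_continuous_above husc hu.2.1 z₀ r hr
    exact ⟨φ, hφ⟩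
  obtain ⟨φ, hφd⟩ := TopologicalSpace.exists_dense_seq {g : C(α, ℝ) // ∀ x, u x < g x}
  have hstep : ∀ g : {g : C(α, ℝ) // ∀ x, u x < g x},
      ∃ v : {g : C(α, ℝ) // ∀ x, u x < g x}, ⇑v.1 ∈ S ∧ ∀ x, v.1 x < g.1 x := by
    rintro ⟨g, hg⟩
    obtain ⟨v, hv, h⟩ := exists_mem_between S hS hconst hadd hsmul hmax hu g hg
    exact ⟨⟨⟨v, hS v hv⟩, fun x => (h x).1⟩, hv, fun x => (h x).2⟩
  choose T hTS hT using hstep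
  let I : {g : C(α, ℝ) // ∀ x, u x < g x} → {g : C(α, ℝ) // ∀ x, u x < g x} →
      {g : C(α, ℝ) // ∀ x, u x < g x} := fun g g' => ⟨g.1 ⊓ g'.1, fun x => by
    rcases le_total (g.1 x) (g'.1 x) with h | h
    · simpa [h] using g.2 x
    · simpa [h] using g'.2 x⟩
  let s : ℕ → {g : C(α, ℝ) // ∀ x, u x < g x} :=
    Nat.rec (T (φ 0)) (fun j g => T (I g (φ (j + 1))))
  have hsS : ∀ j, ⇑(s j).1 ∈ S := by
    rintro (_ | j)
    · exact hTS _
    · exact hTS _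
  have hsφ : ∀ j x, (s j).1 x < (φ j).1 x := by
    rintro (_ | j) x
    · exact hT _ x
    · exact (hT (I (s j) (φ (j + 1))) x).trans_le (min_le_right _ _)
  have hanti : ∀ x, Antitone fun j => (s j).1 x := fun x => antitone_nat_of_succ_le fun j =>
    ((hT (I (s j) (φ (j + 1))) x).trans_le (min_le_left _ _)).le
  refine ⟨fun j => (s j).1, hsS, hanti, fun x => ?_⟩
  refine tendsto_order.2 ⟨fun a ha => Eventually.of_forall fun j => ha.trans ((s j).2 x),
    fun a ha => ?_⟩
  obtain ⟨r, hr1, hr2⟩ := EReal.lt_iff_exists_real_btwn.1 ha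
  obtain ⟨q, hq1, hq2⟩ := EReal.lt_iff_exists_real_btwn.1 hr2
  obtain ⟨ψ, hψ, hψx⟩ := exists_continuous_above husc hu.2.1 x r hr1
  have hop : IsOpen {g : {g : C(α, ℝ) // ∀ x, u x < g x} | g.1 x < q} :=
    isOpen_lt ((continuous_eval_const x).comp continuous_subtype_val)
      continuous_const
  obtain ⟨k, hk⟩ := hφd.exists_mem_open hop ⟨⟨ψ, hψ⟩, by
    simpa [hψx] using hq1⟩
  filter_upwards [eventually_ge_atTop k] with j hj
  exact (EReal.coe_lt_coe_iff.2 (((hanti x hj).trans_lt (hsφ k x)).trans hk)).trans hq2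

theorem isSSubharmonic_of_decreasing {α : Type*} [TopologicalSpace α] [CompactSpace α]
    [MeasurableSpace α] [BorelSpace α] (S : Set (α → ℝ))
    (hS : ∀ f ∈ S, Continuous f) {u : α → EReal} {f : ℕ → α → ℝ} (hfS : ∀ j, f j ∈ S)
    (hanti : ∀ x, Antitone fun j => f j x)
    (hlim : ∀ x, Tendsto (fun j => ((f j x : ℝ) : EReal)) atTop (𝓝 (u x))) :
    IsSSubharmonic S u := by
  have hle : ∀ x j, u x ≤ f j x := fun x j =>
    Antitone.le_of_tendsto (fun a b hab => EReal.coe_le_coe_iff.2 (hanti x hab)) (hlim x) j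
  refine ⟨fun x a ha => ?_, fun x => ((hle x 0).trans_lt (EReal.coe_lt_top _)).ne,
    fun z μ hμ => ?_⟩
  · obtain ⟨j, hj⟩ := ((hlim x).eventually (gt_mem_nhds ha)).exists
    have hc : Continuous fun y => ((f j y : ℝ) : EReal) :=
      continuous_coe_real_ereal.comp (hS _ (hfS j))
    filter_upwards [hc.continuousAt.eventually (gt_mem_nhds hj)] with y hy
    exact (hle y j).trans_lt hy
  · have := hμ.1
    refine ge_of_tendsto' (tendsto_erealIntegral (fun j => (hS _ (hfS j)).measurable)
      (fun j => (hS _ (hfS j)).integrable_of_hasCompactSupport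
        (HasCompactSupport.of_compactSpace _)) hanti hlim) fun j => ?_
    exact (hle z j).trans (EReal.coe_le_coe_iff.2 (hμ.2 _ (hfS j)))

/-- A function `u : X → [-∞, ∞)` is `S`-subharmonic on `X` if and only if it is the
pointwise decreasing limit of a sequence of functions in `S`. -/
theorem subharmonic_iff_decreasing_approx {n : ℕ}
    (X : Set (Fin n → ℂ)) (hX : IsCompact X)
    (S : Set (↥X → ℝ)) (hS : ∀ f ∈ S, Continuous f)
    (hconst : ∀ c : ℝ, (fun _ => c) ∈ S)
    (hadd : ∀ u ∈ S, ∀ v ∈ S, u + v ∈ S)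
    (hsmul : ∀ u ∈ S, ∀ t : ℝ, 0 ≤ t → t • u ∈ S)
    (hmax : ∀ u ∈ S, ∀ v ∈ S, (fun x => max (u x) (v x)) ∈ S)
    (u : ↥X → EReal) :
    IsSSubharmonic S u ↔
      ∃ uj : ℕ → ↥X → ℝ, (∀ j, uj j ∈ S) ∧
        (∀ x, Antitone fun j => uj j x) ∧
        (∀ x, Tendsto (fun j => ((uj j x : ℝ) : EReal)) atTop (𝓝 (u x))) := by
  have : CompactSpace X := isCompact_iff_compactSpace.1 hX
  exact ⟨exists_decreasing_approx S hS hconst hadd hsmul hmax, fun ⟨_, hmem, hanti, hlim⟩ =>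
    isSSubharmonic_of_decreasing S hS hmem hanti hlim⟩
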